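/- With A, i < j, a_{ij} ≠ 0 and B as in the column-exchange construction, let C be the skew-symmetric matrix obtained from B by multiplying rows k and columns k by −1 for all i ≤ k < j. Then for every subset S of {1,…,n}, the Pfaffian of the principal minor of C on S satisfies Pf(C_S) = Pf(A_{S Δ {i,j}})/a_{ij}. -/

import Mathlib

/-- The Pfaffian of an `N × N` matrix (intended for skew-symmetric matrices):
`Pf(A) = ∑_{σ ∈ S'_N} sign(σ) ∏_{k=1}^{N/2} a_{σ(2k-1) σ(2k)}`, where `S'_N` is the
set of permutations `σ` of `{0, …, N-1}` such that `σ(2k)` is minimal among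
`σ(2k), σ(2k+1), …, σ(N-1)` for each `k`.  It is `0` for odd `N` and `1` for `N = 0`. -/
noncomputable def pfaffian {N : ℕ} (A : Matrix (Fin N) (Fin N) ℝ) : ℝ :=
  if h : 2 ∣ N then
    ∑ σ ∈ Finset.univ.filter
        (fun σ : Equiv.Perm (Fin N) =>
          ∀ p q : Fin N, 2 ∣ (p : ℕ) → p ≤ q → σ p ≤ σ q),
      ((Equiv.Perm.sign σ : ℤ) : ℝ) *
        ∏ k : Fin (N / 2),
          A (σ ⟨2 * (k : ℕ), by have := k.2; omega⟩)
            (σ ⟨2 * (k : ℕ) + 1, by have := k.2; omega⟩)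
  else 0

/-- The Pfaffian of the principal minor of `A` indexed by the subset `S`,
with rows and columns of the minor taken in increasing order of index. -/
noncomputable def pfMinor {n : ℕ} (A : Matrix (Fin n) (Fin n) ℝ) (S : Finset (Fin n)) : ℝ :=
  pfaffian (Matrix.of fun p q : Fin S.card =>
    A ((S.orderIsoOfFin rfl p : S) : Fin n) ((S.orderIsoOfFin rfl q : S) : Fin n))


/-- The compound matrix `(A, I_n)` after swapping columns `i, j` of `A` with
columns `i, j` of the identity: its left block. -/
def swapLeft {n : ℕ} (A : Matrix (Fin n) (Fin n) ℝ) (i j : Fin n) :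
    Matrix (Fin n) (Fin n) ℝ :=
  Matrix.of fun r c => if c = i ∨ c = j then (if r = c then 1 else 0) else A r c

/-- The compound matrix `(A, I_n)` after swapping columns `i, j` of `A` with
columns `i, j` of the identity: its right block. -/
def swapRight {n : ℕ} (A : Matrix (Fin n) (Fin n) ℝ) (i j : Fin n) :
    Matrix (Fin n) (Fin n) ℝ :=
  Matrix.of fun r c => if c = i ∨ c = j then A r c else (if r = c then 1 else 0)

/-- The sign `ρ_k`, equal to `−1` for `i ≤ k < j` and `+1` otherwise. -/
noncomputable def rhoSign {n : ℕ} (i j k : Fin n) : ℝ := if i ≤ k ∧ k < j then -1 else 1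

/-!
Let `V = ℝⁿ` with basis `e_k` and dual basis `e_k*`. A skew-symmetric `A` determines a linear form
`F_A` on `⋀ V` with `F_A 1 = 1` and `F_A (v ∧ x) = F_A ((v A) ⌋ x)` (Wick's recursion). Its value
at `e_S` is `Pf(A_S)`, by expansion of the Pfaffian along the first row. In terms of the Clifford
action of `V* ⊕ V` on `⋀ V`, the recursion says that `F_A` vanishes on the image of the Lagrangian
subspace `{(-v A, v)}`.

The operators `γ_k = e_k ∧ · + e_k* ⌋ ·` satisfy `γ_i γ_j e_S = (∏_{k ∈ S} ρ_k) e_{S Δ {i,j}}`, and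
conjugation by `γ_i γ_j` exchanges the `i`th and the `j`th coordinates of `V*` with those of `V`, up
to sign. This is the column exchange: it carries the Lagrangian of `B` to that of `A`. Hence
`F_A ∘ γ_i γ_j = a_{ij} F_B`, and evaluating at `e_S` gives
`Pf(B_S) = (∏_{k ∈ S} ρ_k) Pf(A_{S Δ {i,j}}) / a_{ij}`. Passing from `B` to `C` multiplies
`Pf(B_S)` by the same sign.
-/

section Permutations

variable {N : ℕ}

/-- The permutation `0 ↦ k`, `p + 1 ↦ k.succAbove (σ p)`: the word of `σ`, relabelled to avoid the
letter `k`, with `k` put in front. -/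
def permCons (k : Fin (N + 1)) (σ : Equiv.Perm (Fin N)) : Equiv.Perm (Fin (N + 1)) :=
  k.cycleRange.symm * Equiv.Perm.decomposeFin.symm (0, σ)

@[simp]
theorem permCons_zero (k : Fin (N + 1)) (σ : Equiv.Perm (Fin N)) : permCons k σ 0 = k := by
  simp [permCons]

@[simp]
theorem permCons_succ (k : Fin (N + 1)) (σ : Equiv.Perm (Fin N)) (p : Fin N) :
    permCons k σ p.succ = k.succAbove (σ p) := by
  simp [permCons]

theorem sign_permCons (k : Fin (N + 1)) (σ : Equiv.Perm (Fin N)) :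
    Equiv.Perm.sign (permCons k σ) = (-1) ^ (k : ℕ) * Equiv.Perm.sign σ := by
  simp [permCons, Fin.sign_cycleRange, Equiv.Perm.decomposeFin.symm_sign]

theorem permCons_bijective :
    Function.Bijective fun x : Fin (N + 1) × Equiv.Perm (Fin N) => permCons x.1 x.2 := by
  refine (Fintype.bijective_iff_injective_and_card _).2 ⟨?_, ?_⟩
  · rintro ⟨k, σ⟩ ⟨k', σ'⟩ h
    obtain rfl : k = k' := by simpa using DFunLike.congr_fun h 0
    have hσ : σ = σ' := Equiv.ext fun p => by simpa using DFunLike.congr_fun h p.succ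
    rw [hσ]
  · simp [Fintype.card_perm, Nat.factorial_succ]

/-- The permutations indexing the sum in `pfaffian`: each even position carries the least of the
values from that position on. -/
def IsPfaffianPerm (σ : Equiv.Perm (Fin N)) : Prop :=
  ∀ p q : Fin N, 2 ∣ (p : ℕ) → p ≤ q → σ p ≤ σ q

theorem IsPfaffianPerm.apply_zero {σ : Equiv.Perm (Fin (N + 1))} (hσ : IsPfaffianPerm σ) :
    σ 0 = 0 := by
  simpa using hσ 0 (σ.symm 0) (dvd_zero 2) (Fin.zero_le _)

theorem isPfaffianPerm_permCons_permCons (k : Fin (N + 1)) (σ : Equiv.Perm (Fin N)) :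
    IsPfaffianPerm (permCons 0 (permCons k σ)) ↔ IsPfaffianPerm σ := by
  constructor
  · intro h p q hp hpq
    simpa using h p.succ.succ q.succ.succ (by simpa [add_assoc] using hp) (by simpa using hpq)
  · intro h p q hp hpq
    cases p using Fin.cases with
    | zero => simp
    | succ p =>
      cases p using Fin.cases with
      | zero => simp at hp
      | succ p =>
        cases q using Fin.cases with
        | zero => simp at hpq
        | succ q =>
          cases q using Fin.cases with
          | zero => simp [Fin.le_def] at hpq
          | succ q =>
            simpa using h p q (by simpa [add_assoc] using hp) (by simpa using hpq)

end Permutations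

section PfaffianExpansion

variable {N : ℕ}

theorem prod_pairs_add_two {R : Type*} [CommMonoid R] (f : Fin (N + 2) → Fin (N + 2) → R) :
    ∏ k : Fin ((N + 2) / 2), f ⟨2 * (k : ℕ), by omega⟩ ⟨2 * (k : ℕ) + 1, by omega⟩ =
      f 0 (Fin.succ 0) * ∏ k : Fin (N / 2),
        f (Fin.succ (Fin.succ ⟨2 * (k : ℕ), by omega⟩))
          (Fin.succ (Fin.succ ⟨2 * (k : ℕ) + 1, by omega⟩)) := by
  have h : N / 2 + 1 = (N + 2) / 2 := by omega
  rw [← (finCongr h).prod_comp, Fin.prod_univ_succ]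
  rfl

theorem pfaffian_of_odd {A : Matrix (Fin N) (Fin N) ℝ} (hN : ¬ 2 ∣ N) : pfaffian A = 0 :=
  dif_neg hN

theorem pfaffian_fin_zero (A : Matrix (Fin 0) (Fin 0) ℝ) : pfaffian A = 1 := by
  simp [pfaffian]

theorem pfaffian_add_two (A : Matrix (Fin (N + 2)) (Fin (N + 2)) ℝ) :
    pfaffian A = ∑ k : Fin (N + 1), (-1) ^ (k : ℕ) * A 0 k.succ *
      pfaffian (A.submatrix (Fin.succ ∘ k.succAbove) (Fin.succ ∘ k.succAbove)) := by
  by_cases hN : 2 ∣ N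
  swap
  · simp [pfaffian_of_odd, hN]
  have hN2 : 2 ∣ N + 2 := by omega
  simp only [pfaffian, dif_pos hN, dif_pos hN2, Finset.mul_sum, ← Finset.sum_product']
  symm
  refine Finset.sum_bij (fun x _ => permCons 0 (permCons x.1 x.2)) ?_ ?_ ?_ ?_
  · rintro ⟨k, σ⟩ hσ
    simp only [Finset.mem_product, Finset.mem_filter_univ] at hσ ⊢
    exact (isPfaffianPerm_permCons_permCons k σ).2 hσ.2
  · rintro ⟨k, σ⟩ - ⟨k', σ'⟩ - h
    have hcons := congrArg Prod.snd (permCons_bijective.1 (a₁ := (0, _)) (a₂ := (0, _)) h)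
    exact permCons_bijective.1 hcons
  · intro σ hσ
    replace hσ : IsPfaffianPerm σ := (Finset.mem_filter.1 hσ).2
    obtain ⟨⟨m, τ⟩, rfl⟩ := permCons_bijective.2 σ
    obtain ⟨⟨k, ρ⟩, rfl⟩ := permCons_bijective.2 τ
    obtain rfl : m = 0 := (permCons_zero m _).symm.trans hσ.apply_zero
    have hρ : IsPfaffianPerm ρ := (isPfaffianPerm_permCons_permCons k ρ).1 hσ
    refine ⟨(k, ρ), ?_, rfl⟩
    simp only [Finset.mem_product, Finset.mem_univ, Finset.mem_filter_univ, true_and]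
    exact hρ
  · rintro ⟨k, σ⟩ -
    rw [prod_pairs_add_two fun p q => A (permCons 0 (permCons k σ) p) (permCons 0 (permCons k σ) q)]
    simp only [permCons_zero, permCons_succ, Fin.succAbove_zero, sign_permCons,
      Matrix.submatrix_apply, Function.comp_apply, Fin.val_zero, pow_zero, one_mul]
    push_cast
    ring

theorem pfaffian_mul_mul (c : Fin N → ℝ) (A : Matrix (Fin N) (Fin N) ℝ) :
    pfaffian (Matrix.of fun p q => c p * c q * A p q) = (∏ p, c p) * pfaffian A := by
  induction N using Nat.twoStepInduction with
  | zero => simp [pfaffian_fin_zero]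
  | one => simp [pfaffian_of_odd]
  | more N ih _ =>
    simp only [pfaffian_add_two, Finset.mul_sum]
    refine Finset.sum_congr rfl fun k _ => ?_
    have hminor := ih (c ∘ Fin.succ ∘ k.succAbove)
      (A.submatrix (Fin.succ ∘ k.succAbove) (Fin.succ ∘ k.succAbove))
    calc _ = (-1) ^ (k : ℕ) * (c 0 * c k.succ * A 0 k.succ) * ((∏ p, c (k.succAbove p).succ) *
          pfaffian (A.submatrix (Fin.succ ∘ k.succAbove) (Fin.succ ∘ k.succAbove))) :=
        congrArg _ hminor
      _ = _ := by
        rw [Fin.prod_univ_succ, Fin.prod_univ_succAbove (fun p => c p.succ) k]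
        ring

theorem pfMinor_mul_mul {n : ℕ} (c : Fin n → ℝ) (A : Matrix (Fin n) (Fin n) ℝ)
    (S : Finset (Fin n)) :
    pfMinor (Matrix.of fun k l => c k * c l * A k l) S = (∏ k ∈ S, c k) * pfMinor A S := by
  rw [← Finset.prod_coe_sort, ← (S.orderIsoOfFin rfl).toEquiv.prod_comp]
  exact pfaffian_mul_mul _ _

end PfaffianExpansion

section CliffordAction

open CliffordAlgebra (contractLeft contractLeft_ι_mul contractLeft_contractLeft)
open ExteriorAlgebra (ι ι_sq_zero ιMulti ιMulti_succ_apply)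

variable {R M : Type*} [CommRing R] [AddCommGroup M] [Module R M]

theorem contractLeft_ιMulti_succ {N : ℕ} (d : Module.Dual R M) (v : Fin (N + 1) → M) :
    contractLeft d (ιMulti R (N + 1) v) = ∑ k : Fin (N + 1), ((-1) ^ (k : ℕ) * d (v k)) •
      ιMulti R N (v ∘ k.succAbove) := by
  induction N with
  | zero => simp [Algebra.algebraMap_eq_smul_one]
  | succ N ih =>
    rw [ιMulti_succ_apply, contractLeft_ι_mul, Fin.sum_univ_succ, ih, Finset.mul_sum,
      sub_eq_add_neg, ← Finset.sum_neg_distrib]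
    congr 1
    · simp [Matrix.vecTail]
    · refine Finset.sum_congr rfl fun k _ => ?_
      have htail : Matrix.vecTail (v ∘ k.succ.succAbove) = Matrix.vecTail v ∘ k.succAbove := by
        ext p
        simp [Matrix.vecTail]
      rw [ιMulti_succ_apply, htail, mul_smul_comm, ← neg_smul]
      simp [Matrix.vecTail, pow_succ]

/-- The action of `V* ⊕ V` on `⋀ V` by contraction and exterior multiplication; it extends to the
Clifford algebra of the pairing `LinearMap.dualProd`. -/
def cliffordAction : Module.Dual R M × M →ₗ[R] Module.End R (ExteriorAlgebra R M) :=
  LinearMap.coprod contractLeft (LinearMap.mul R (ExteriorAlgebra R M) ∘ₗ ι R)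

theorem cliffordAction_apply (w : Module.Dual R M × M) (x : ExteriorAlgebra R M) :
    cliffordAction w x = contractLeft w.1 x + ι R w.2 * x := rfl

theorem cliffordAction_mul_self (w : Module.Dual R M × M) :
    cliffordAction w * cliffordAction w = w.1 w.2 • 1 := by
  refine LinearMap.ext fun x => ?_
  simp only [Module.End.mul_apply, cliffordAction_apply, map_add, contractLeft_contractLeft,
    contractLeft_ι_mul, ← mul_assoc, ι_sq_zero, zero_mul, LinearMap.smul_apply,
    Module.End.one_apply]
  abel

theorem cliffordAction_mul_add_swap (u w : Module.Dual R M × M) :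
    cliffordAction u * cliffordAction w + cliffordAction w * cliffordAction u =
      LinearMap.dualProd R M u w • 1 := by
  have h := cliffordAction_mul_self (u + w)
  simp only [map_add, add_mul, mul_add, cliffordAction_mul_self, Prod.fst_add, Prod.snd_add,
    LinearMap.add_apply, add_smul] at h
  rw [LinearMap.dualProd_apply_apply, add_smul]
  linear_combination (norm := module) h

theorem cliffordAction_mul_reflect {u : Module.Dual R M × M} (hu : u.1 u.2 = 1)
    (w : Module.Dual R M × M) :
    cliffordAction u * cliffordAction w =
      cliffordAction (LinearMap.dualProd R M u w • u - w) * cliffordAction u := by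
  rw [map_sub, map_smul, sub_mul, smul_mul_assoc, cliffordAction_mul_self, hu, one_smul,
    ← cliffordAction_mul_add_swap, add_sub_cancel_right]

theorem cliffordAction_mul_mul_reflect {u u' : Module.Dual R M × M} (hu : u.1 u.2 = 1)
    (hu' : u'.1 u'.2 = 1) (huu' : LinearMap.dualProd R M u u' = 0) (w : Module.Dual R M × M) :
    cliffordAction u * cliffordAction u' * cliffordAction w =
      cliffordAction (w - LinearMap.dualProd R M u w • u - LinearMap.dualProd R M u' w • u') *
        (cliffordAction u * cliffordAction u') := by
  rw [mul_assoc, cliffordAction_mul_reflect hu', ← mul_assoc, cliffordAction_mul_reflect hu,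
    mul_assoc]
  congr 2
  rw [map_sub, map_smul, huu']
  module

end CliffordAction

section WickFunctional

open CliffordAlgebra (changeForm changeForm_ι_mul changeForm_contractLeft contractLeft)
open ExteriorAlgebra (ι ιMulti ιMulti_succ_apply algebraMapInv)

variable {R M : Type*} [CommRing R] [AddCommGroup M] [Module R M]

/-- The Wick functional of an alternating form `b`: the linear form on `⋀ V` which sends
`v₁ ∧ ⋯ ∧ v_N` to the Pfaffian of `(b (v_p) (v_q))`, characterised by Wick's recursion. -/
structure IsWickFunctional (b : LinearMap.BilinForm R M) (F : ExteriorAlgebra R M →ₗ[R] R) :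
    Prop where
  map_one : F 1 = 1
  map_ι_mul : ∀ v x, F (ι R v * x) = F (contractLeft (b v) x)

-- Deforming the zero form by `-b` turns `v ∧ x` into `v ∧ x + b v ⌋ x`, whose scalar part is that
-- of `b v ⌋ x`.
theorem exists_isWickFunctional {b : LinearMap.BilinForm R M} (hb : b.IsAlt) :
    ∃ F, IsWickFunctional b F := by
  have h : (-b).toQuadraticMap = (0 : QuadraticForm R M) - 0 := by
    ext v
    simp [hb.self_eq_zero v]
  have hscalar (v : M) (x : ExteriorAlgebra R M) : algebraMapInv (ι R v * x) = 0 := by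
    simp [algebraMapInv]
  refine ⟨algebraMapInv.toLinearMap ∘ₗ changeForm h, ?_, fun v x => ?_⟩
  · simp
  · simp [changeForm_ι_mul, changeForm_contractLeft, hscalar]

theorem IsWickFunctional.map_cliffordAction {b : LinearMap.BilinForm R M}
    {F : ExteriorAlgebra R M →ₗ[R] R} (hF : IsWickFunctional b F) (v : M)
    (x : ExteriorAlgebra R M) : F (cliffordAction (-b v, v) x) = 0 := by
  simp [cliffordAction_apply, hF.map_ι_mul]

theorem IsWickFunctional.map_ιMulti {V : Type*} [AddCommGroup V] [Module ℝ V]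
    {b : LinearMap.BilinForm ℝ V} {F : ExteriorAlgebra ℝ V →ₗ[ℝ] ℝ} (hF : IsWickFunctional b F) :
    ∀ {N : ℕ} (v : Fin N → V),
      F (ιMulti ℝ N v) = pfaffian (Matrix.of fun p q => b (v p) (v q))
  | 0, v => by simp [pfaffian_fin_zero, hF.map_one]
  | 1, v => by
    rw [pfaffian_of_odd (by decide), ιMulti_succ_apply, hF.map_ι_mul]
    simp
  | N + 2, v => by
    rw [pfaffian_add_two, ιMulti_succ_apply, hF.map_ι_mul, contractLeft_ιMulti_succ, map_sum]
    refine Finset.sum_congr rfl fun k _ => ?_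
    rw [map_smul, smul_eq_mul, hF.map_ιMulti]
    rfl

end WickFunctional

section Blades

open CliffordAlgebra (contractLeft contractLeft_ι_mul contractLeft_one)

variable {R κ : Type*} [CommRing R] [LinearOrder κ]

variable (R) in
/-- The basis vector `e_S = e_{s₁} ∧ ⋯ ∧ e_{s_r}` of `⋀ R^κ` attached to `S = {s₁ < ⋯ < s_r}`. -/
def blade (S : Finset κ) : ExteriorAlgebra R (κ → R) :=
  (S.sort.map fun k => ExteriorAlgebra.ι R (Pi.single k 1)).prod

theorem blade_empty : blade R (∅ : Finset κ) = 1 := by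
  simp [blade]

theorem blade_insert {k : κ} {S : Finset κ} (hk : ∀ l ∈ S, k < l) :
    blade R (insert k S) = ExteriorAlgebra.ι R (Pi.single k 1) * blade R S := by
  rw [blade, Finset.sort_insert _ (fun l hl => (hk l hl).le) fun h => (hk k h).false,
    List.map_cons, List.prod_cons, blade]

theorem blade_eq_ιMulti (S : Finset κ) :
    blade R S = ExteriorAlgebra.ιMulti R S.card fun p => Pi.single (S.orderEmbOfFin rfl p) 1 := by
  rw [blade, ← Finset.listMap_orderEmbOfFin_finRange S rfl, List.map_map,
    ExteriorAlgebra.ιMulti_apply, List.ofFn_eq_map]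
  rfl

theorem contractLeft_proj_blade {k : κ} {S : Finset κ} (hk : k ∉ S) :
    contractLeft (LinearMap.proj k) (blade R S) = 0 := by
  induction S using Finset.induction_on_min with
  | empty => rw [blade_empty, contractLeft_one]
  | insert a S ha ih =>
    rw [Finset.mem_insert, not_or] at hk
    rw [blade_insert ha, contractLeft_ι_mul, ih hk.2]
    simp [hk.1]

variable (R) in
/-- The vector `(e_k*, e_k)` of `V* ⊕ V`, whose Clifford action exchanges the presence and the
absence of `e_k` in a blade. -/
def toggleVector (k : κ) : Module.Dual R (κ → R) × (κ → R) :=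
  (LinearMap.proj k, Pi.single k 1)

variable (R) in
/-- The operator `e_k ∧ · + e_k* ⌋ ·` on `⋀ R^κ`. -/
def toggle (k : κ) : Module.End R (ExteriorAlgebra R (κ → R)) :=
  cliffordAction (toggleVector R k)

theorem toggle_apply (k : κ) (x : ExteriorAlgebra R (κ → R)) :
    toggle R k x =
      contractLeft (LinearMap.proj k) x + ExteriorAlgebra.ι R (Pi.single k 1) * x := rfl

theorem toggle_ι_mul_of_ne {a k : κ} (hak : a ≠ k) (x : ExteriorAlgebra R (κ → R)) :
    toggle R k (ExteriorAlgebra.ι R (Pi.single a 1) * x) =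
      -(ExteriorAlgebra.ι R (Pi.single a 1) * toggle R k x) := by
  rw [toggle_apply, toggle_apply, contractLeft_ι_mul, mul_add, ← mul_assoc, ← mul_assoc,
    eq_neg_of_add_eq_zero_left (ExteriorAlgebra.ι_add_mul_swap (Pi.single k 1) _)]
  simp [hak.symm, sub_eq_add_neg, add_comm]

theorem toggle_blade_of_lt {k : κ} {S : Finset κ} (hk : ∀ l ∈ S, k < l) :
    toggle R k (blade R S) = blade R (insert k S) := by
  rw [toggle_apply, contractLeft_proj_blade fun h => (hk k h).false, zero_add, blade_insert hk]

theorem toggle_blade (k : κ) (S : Finset κ) :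
    toggle R k (blade R S) =
      (∏ l ∈ S, if l < k then (-1 : R) else 1) • blade R (symmDiff S {k}) := by
  induction S using Finset.induction_on_min with
  | empty =>
    rw [toggle_blade_of_lt (by simp), ← Finset.bot_eq_empty, bot_symmDiff]
    simp
  | insert a S ha ih =>
    have haS : a ∉ S := fun h => (ha a h).false
    rcases lt_trichotomy a k with hak | rfl | hka
    · have hsymm : symmDiff (insert a S) {k} = insert a (symmDiff S {k}) := by
        grind [Finset.mem_symmDiff]
      have hmin : ∀ l ∈ symmDiff S {k}, a < l := by grind [Finset.mem_symmDiff]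
      rw [Finset.prod_insert haS, if_pos hak, hsymm, blade_insert ha, blade_insert hmin,
        toggle_ι_mul_of_ne hak.ne, ih, mul_smul_comm, neg_one_mul, neg_smul]
    · have hsymm : symmDiff (insert a S) {a} = S := by
        grind [Finset.mem_symmDiff]
      have hsign : ∏ l ∈ insert a S, (if l < a then -1 else 1 : R) = 1 :=
        Finset.prod_eq_one fun l hl => if_neg (by grind)
      rw [hsign, hsymm, one_smul, blade_insert ha, toggle_apply, contractLeft_ι_mul,
        contractLeft_proj_blade haS, ← mul_assoc, ExteriorAlgebra.ι_sq_zero]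
      simp
    · have hsymm : symmDiff (insert a S) {k} = insert k (insert a S) := by
        grind [Finset.mem_symmDiff]
      have hmin : ∀ l ∈ insert a S, k < l := by grind
      have hsign : ∏ l ∈ insert a S, (if l < k then -1 else 1 : R) = 1 :=
        Finset.prod_eq_one fun l hl => if_neg (hmin l hl).not_gt
      rw [hsign, hsymm, one_smul, toggle_blade_of_lt hmin]

theorem toggle_toggle_blade {i j : κ} (hij : i < j) (S : Finset κ) :
    toggle R i (toggle R j (blade R S)) =
      (∏ k ∈ S, if i ≤ k ∧ k < j then (-1 : R) else 1) • blade R (symmDiff S {i, j}) := by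
  have hsymm : symmDiff (symmDiff S {j}) {i} = symmDiff S {i, j} := by
    grind [Finset.mem_symmDiff]
  have hsign : ∏ k ∈ symmDiff S {j}, (if k < i then -1 else 1 : R) =
      ∏ k ∈ S, if k < i then -1 else 1 := by
    rw [← Finset.prod_filter, ← Finset.prod_filter]
    congr 1
    grind [Finset.mem_symmDiff]
  rw [toggle_blade, map_smul, toggle_blade, smul_smul, hsymm, hsign, ← Finset.prod_mul_distrib]
  congr 1
  refine Finset.prod_congr rfl fun k _ => ?_
  have := hij.le
  grind

end Blades

section MatrixForm

open scoped Matrix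

variable {R κ : Type*} [CommRing R] [Fintype κ] [DecidableEq κ]

theorem isAlt_toBilin' [IsAddTorsionFree R] {A : Matrix κ κ R} (hA : Aᵀ = -A) :
    (Matrix.toBilin' A).IsAlt := fun v => by
  have h : v ⬝ᵥ A *ᵥ v = -(v ⬝ᵥ A *ᵥ v) := by
    rw [← dotProduct_neg, ← Matrix.neg_mulVec, ← hA, Matrix.mulVec_transpose,
      Matrix.dotProduct_mulVec, dotProduct_comm]
  rw [Matrix.toBilin'_apply', self_eq_neg.1 h]

theorem toBilin'_apply_single_one (A : Matrix κ κ R) (v : κ → R) (c : κ) :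
    Matrix.toBilin' A v (Pi.single c 1) = (v ᵥ* A) c := by
  rw [Matrix.toBilin'_apply', Matrix.dotProduct_mulVec, dotProduct_single_one]

end MatrixForm

section ColumnExchange

open scoped Matrix
open CliffordAlgebra (contractLeft_ι_mul)

variable {n : ℕ} {i j : Fin n} {A B : Matrix (Fin n) (Fin n) ℝ}

theorem vecMul_swapRight (A : Matrix (Fin n) (Fin n) ℝ) (v : Fin n → ℝ) (c : Fin n) :
    (v ᵥ* swapRight A i j) c = if c = i ∨ c = j then (v ᵥ* A) c else v c := by
  by_cases hc : c = i ∨ c = j <;> simp [Matrix.vecMul, dotProduct, swapRight, hc]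

theorem vecMul_swapLeft (A : Matrix (Fin n) (Fin n) ℝ) (v : Fin n → ℝ) (c : Fin n) :
    (v ᵥ* swapLeft A i j) c = if c = i ∨ c = j then v c else (v ᵥ* A) c := by
  by_cases hc : c = i ∨ c = j <;> simp [Matrix.vecMul, dotProduct, swapLeft, hc]

theorem swapRight_mul_swapRight (hB : swapRight A i j * B = swapLeft A i j) :
    swapRight A i j * swapRight B i j = 1 := by
  refine Matrix.ext_of_single_vecMul fun r => funext fun c => ?_
  rw [← Matrix.vecMul_vecMul, vecMul_swapRight, Matrix.vecMul_vecMul, hB, vecMul_swapLeft,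
    vecMul_swapRight, Matrix.vecMul_one]
  split <;> rfl

theorem swapRight_mul_swapLeft (hB : swapRight A i j * B = swapLeft A i j) :
    swapRight A i j * swapLeft B i j = A := by
  refine Matrix.ext_of_single_vecMul fun r => funext fun c => ?_
  rw [← Matrix.vecMul_vecMul, vecMul_swapLeft, Matrix.vecMul_vecMul, hB, vecMul_swapLeft,
    vecMul_swapRight]
  split <;> rfl

theorem swapRight_mul_of_swapRight_mul (hB : swapRight A i j * B = swapLeft A i j) :
    swapRight B i j * A = swapLeft B i j := by
  rw [← swapRight_mul_swapLeft hB, ← mul_assoc,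
    mul_eq_one_comm.1 (swapRight_mul_swapRight hB), one_mul]

theorem IsWickFunctional.map_blade {F : ExteriorAlgebra ℝ (Fin n → ℝ) →ₗ[ℝ] ℝ}
    (hF : IsWickFunctional (Matrix.toBilin' A) F) (S : Finset (Fin n)) :
    F (blade ℝ S) = pfMinor A S := by
  rw [blade_eq_ιMulti, hF.map_ιMulti]
  simp [pfMinor]

-- Conjugation by `toggle i * toggle j` swaps the `i`th and `j`th coordinates of `V*` with those of
-- `V` up to sign, just as `swapRight` and `swapLeft` swap columns.
theorem toggle_mul_toggle_mul_cliffordAction (hij : i ≠ j)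
    (hBA : swapRight B i j * A = swapLeft B i j) (v : Fin n → ℝ) :
    toggle ℝ i * toggle ℝ j * cliffordAction (-Matrix.toBilin' B v, v) =
      cliffordAction (-Matrix.toBilin' A (v ᵥ* swapRight B i j), v ᵥ* swapRight B i j) *
        (toggle ℝ i * toggle ℝ j) := by
  rw [toggle, toggle, cliffordAction_mul_mul_reflect (by simp [toggleVector])
    (by simp [toggleVector]) (by simp [toggleVector, hij, hij.symm])]
  congr 2
  refine Prod.ext (LinearMap.pi_ext' fun c => LinearMap.ext_ring ?_) (funext fun c => ?_)
  · rcases eq_or_ne c i with rfl | hci <;> rcases eq_or_ne c j with rfl | hcj <;>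
      simp_all [toggleVector, toBilin'_apply_single_one, vecMul_swapLeft]
  · rcases eq_or_ne c i with rfl | hci <;> rcases eq_or_ne c j with rfl | hcj <;>
      simp_all [toggleVector, toBilin'_apply_single_one, vecMul_swapRight]

theorem IsWickFunctional.columnExchange {F : ExteriorAlgebra ℝ (Fin n → ℝ) →ₗ[ℝ] ℝ}
    (hF : IsWickFunctional (Matrix.toBilin' A) F) (hij : i ≠ j) (ha : A i j ≠ 0)
    (hBA : swapRight B i j * A = swapLeft B i j) :
    IsWickFunctional (Matrix.toBilin' B) ((A i j)⁻¹ • F ∘ₗ (toggle ℝ i * toggle ℝ j)) where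
  map_one := by
    have hone : F ((toggle ℝ i * toggle ℝ j) 1) = A i j := by
      rw [← blade_empty, Module.End.mul_apply, toggle_blade_of_lt (by simp), toggle_apply,
        contractLeft_proj_blade (by simpa using hij), zero_add, hF.map_ι_mul,
        blade_insert (by simp), blade_empty, contractLeft_ι_mul]
      simp [hF.map_one]
    rw [LinearMap.smul_apply, LinearMap.comp_apply, hone, smul_eq_mul, inv_mul_cancel₀ ha]
  map_ι_mul v x := by
    have h : F ((toggle ℝ i * toggle ℝ j) (cliffordAction (-Matrix.toBilin' B v, v) x)) = 0 := by
      rw [← Module.End.mul_apply, toggle_mul_toggle_mul_cliffordAction hij hBA,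
        Module.End.mul_apply, hF.map_cliffordAction]
    rw [cliffordAction_apply, map_neg, LinearMap.neg_apply, map_add, map_add, map_neg, map_neg,
      neg_add_eq_zero] at h
    rw [LinearMap.smul_apply, LinearMap.smul_apply, LinearMap.comp_apply, LinearMap.comp_apply, h]

theorem prod_rhoSign_mul_self (i j : Fin n) (S : Finset (Fin n)) :
    (∏ k ∈ S, rhoSign i j k) * ∏ k ∈ S, rhoSign i j k = 1 := by
  rw [← Finset.prod_mul_distrib]
  refine Finset.prod_eq_one fun k _ => ?_
  rw [rhoSign]
  split <;> norm_num

end ColumnExchange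

/-- With `A` skew-symmetric, `i < j`, `a_{ij} ≠ 0`, and `B` as in the
column-exchange construction, let `C` be the skew-symmetric matrix obtained from
`B` by multiplying rows `k` and columns `k` by `−1` for all `i ≤ k < j`.  Then for
every subset `S` of `{1,…,n}`, `Pf(C_S) = Pf(A_{S Δ {i,j}})/a_{ij}`. -/
theorem columnExchange_pfaffian_minors {n : ℕ} (A B : Matrix (Fin n) (Fin n) ℝ)
    (hA : A.transpose = -A) (i j : Fin n) (hij : i < j) (ha : A i j ≠ 0)
    (hB : swapRight A i j * B = swapLeft A i j) :
    ∀ S : Finset (Fin n),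
      pfMinor (Matrix.of fun k l => rhoSign i j k * rhoSign i j l * B k l) S =
        pfMinor A (symmDiff S {i, j}) / A i j := by
  intro S
  obtain ⟨F, hF⟩ := exists_isWickFunctional (isAlt_toBilin' hA)
  have hG := hF.columnExchange hij.ne ha (swapRight_mul_of_swapRight_mul hB)
  have hminor : pfMinor B S =
      (∏ k ∈ S, rhoSign i j k) * (pfMinor A (symmDiff S {i, j}) / A i j) := by
    rw [← hG.map_blade, LinearMap.smul_apply, LinearMap.comp_apply, Module.End.mul_apply,
      toggle_toggle_blade hij, map_smul, hF.map_blade, smul_eq_mul, smul_eq_mul, div_eq_inv_mul,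
      mul_left_comm]
    rfl
  rw [pfMinor_mul_mul, hminor, ← mul_assoc, prod_rhoSign_mul_self, one_mul]
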